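/- The triangular array b^n_k defined by b^n_k = Σ_{l=1}^{k+1} (-1)^{l+1} · C(n-l, k+1-l) · Σ_{compositions m of n with length l} n!/(m_1!⋯m_l!) satisfies the symmetry b^n_k = (-1)^{n+1} · b^n_{n-1-k} for all 0 ≤ k ≤ n-1. -/

import Mathlib

open Finset

/-- The coefficients `b^n_k` (as real numbers). -/
noncomputable def bcoef (n k : ℕ) : ℝ :=
  ∑ l ∈ Finset.Icc 1 (k + 1),
    (-1 : ℝ) ^ (l + 1) * (Nat.choose (n - l) (k + 1 - l) : ℝ) *
      ∑ c ∈ Finset.univ.filter (fun c : Composition n => c.length = l),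
        ((n.factorial : ℝ) / ((c.blocks.map Nat.factorial).prod : ℝ))

/-- `n!` times the `n`-th coefficient of `(exp - 1)^l`: number of surjections. -/
noncomputable def surjT (n l : ℕ) : ℝ :=
  (n.factorial : ℝ) * PowerSeries.coeff n ((PowerSeries.exp ℝ - 1) ^ l)

theorem surjT_succ (n l : ℕ) :
    surjT (n + 1) (l + 1) = (l + 1) * (surjT n (l + 1) + surjT n l) := by
  have h := PowerSeries.coeff_derivative ((PowerSeries.exp ℝ - 1) ^ (l + 1)) n
  have h2 : PowerSeries.derivative ℝ ((PowerSeries.exp ℝ - 1) ^ (l + 1))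
      = (l + 1 : ℕ) • ((PowerSeries.exp ℝ - 1) ^ (l + 1) + (PowerSeries.exp ℝ - 1) ^ l) := by
    rw [PowerSeries.derivative_pow, map_sub, PowerSeries.derivative_exp,
      PowerSeries.derivative_one, nsmul_eq_mul, Nat.add_sub_cancel]
    ring
  rw [h2, map_nsmul, nsmul_eq_mul, map_add] at h
  unfold surjT
  rw [Nat.factorial_succ]
  push_cast at h ⊢
  linear_combination (-(n.factorial : ℝ)) * h

theorem surjT_zero_right (n : ℕ) : surjT (n + 1) 0 = 0 := by
  simp [surjT, PowerSeries.coeff_one]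

theorem surjT_zero_left (l : ℕ) : surjT 0 (l + 1) = 0 := by
  simp [surjT]

theorem surjT_gt (n : ℕ) : ∀ l, n < l → surjT n l = 0 := by
  induction n with
  | zero =>
    intro l hl
    obtain ⟨m, rfl⟩ : ∃ m, l = m + 1 := ⟨l - 1, by omega⟩
    exact surjT_zero_left m
  | succ n ih =>
    intro l hl
    obtain ⟨m, rfl⟩ : ∃ m, l = m + 1 := ⟨l - 1, by omega⟩
    rw [surjT_succ, ih _ (by omega), ih _ (by omega)]
    ring

theorem coeff_expm1 (m : ℕ) (hm : 0 < m) :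
    PowerSeries.coeff m (PowerSeries.exp ℝ - 1) = 1 / (m.factorial : ℝ) := by
  simp [PowerSeries.coeff_exp, PowerSeries.coeff_one, hm.ne']

theorem list_prod_aux (L : List ℕ) (h : ∀ i ∈ L, 0 < i) :
    1 / ((L.map Nat.factorial).prod : ℝ) =
    ∏ i ∈ range L.length, PowerSeries.coeff (L.getD i 0) (PowerSeries.exp ℝ - 1) := by
  induction L with
  | nil => simp
  | cons a L ih =>
    rw [List.length_cons, prod_range_succ']
    simp only [List.getD_cons_succ, List.getD_cons_zero]
    rw [← ih (fun i hi => h i (by simp [hi])), coeff_expm1 a (h a (by simp))]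
    simp only [List.map_cons, List.prod_cons]
    push_cast
    rw [one_div_mul_one_div, mul_comm]

theorem list_sum_aux (L : List ℕ) : ∑ i ∈ range L.length, L.getD i 0 = L.sum := by
  induction L with
  | nil => simp
  | cons a L ih =>
    rw [List.length_cons, sum_range_succ']
    simp only [List.getD_cons_succ, List.getD_cons_zero]
    rw [ih, List.sum_cons, add_comm]

theorem comp_sum (n l : ℕ) :
    ∑ c ∈ Finset.univ.filter (fun c : Composition n => c.length = l),
        ((n.factorial : ℝ) / ((c.blocks.map Nat.factorial).prod : ℝ)) = surjT n l := by
  unfold surjT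
  rw [PowerSeries.coeff_pow, mul_sum]
  have hz : ∀ f ∈ finsuppAntidiag (range l) n,
      (n.factorial : ℝ) * ∏ i ∈ range l, PowerSeries.coeff (f i) (PowerSeries.exp ℝ - 1) ≠ 0 →
      ∀ i ∈ range l, 0 < f i := by
    intro f _ hne i hi
    by_contra h0
    apply hne
    have h0' : f i = 0 := by omega
    rw [prod_eq_zero hi (by rw [h0']; simp), mul_zero]
  rw [← sum_filter_of_ne (p := fun f : ℕ →₀ ℕ => ∀ i ∈ range l, 0 < f i) hz]
  refine sum_bij (fun c _ => c.blocks.toFinsupp) ?_ ?_ ?_ ?_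
  · intro c hc
    have hl : c.blocks.length = l := by simpa using hc
    rw [mem_filter, mem_finsuppAntidiag]
    refine ⟨⟨?_, ?_⟩, ?_⟩
    · rw [← hl]
      exact (list_sum_aux c.blocks).trans c.blocks_sum
    · rw [List.toFinsupp_support, ← hl]
      exact filter_subset _ _
    · intro i hi
      rw [← hl, mem_range] at hi
      rw [List.toFinsupp_apply, List.getD_eq_getElem _ _ hi]
      exact c.blocks_pos (List.getElem_mem hi)
  · intro c hc d hd h
    have hl : c.blocks.length = l := by simpa using hc
    have hl' : d.blocks.length = l := by simpa using hd
    apply Composition.ext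
    apply List.ext_getElem (hl.trans hl'.symm)
    intro i h1 h2
    have := DFunLike.congr_fun h i
    rwa [List.toFinsupp_apply, List.toFinsupp_apply, List.getD_eq_getElem _ _ h1,
      List.getD_eq_getElem _ _ h2] at this
  · intro f hf
    rw [mem_filter, mem_finsuppAntidiag] at hf
    obtain ⟨⟨hs, hsup⟩, hpos⟩ := hf
    refine ⟨⟨(List.range l).map f, ?_, ?_⟩, ?_, ?_⟩
    · intro i hi
      obtain ⟨j, hj, rfl⟩ := List.mem_map.1 hi
      exact hpos j (by simpa using hj)
    · rw [← hs, ← list_sum_aux]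
      simp only [List.length_map, List.length_range]
      apply sum_congr rfl
      intro i hi
      rw [List.getD_eq_getElem _ _ (by simpa using hi)]
      simp
    · simp [Composition.length]
    · ext i
      rw [List.toFinsupp_apply]
      by_cases hi : i < l
      · rw [List.getD_eq_getElem _ _ (by simpa using hi)]
        simp
      · rw [List.getD_eq_default _ _ (by simpa using hi)]
        by_contra hne
        exact hi (mem_range.1 (hsup (Finsupp.mem_support_iff.2 (Ne.symm hne))))
  · intro c hc
    have hl : c.blocks.length = l := by simpa using hc
    have := list_prod_aux c.blocks (fun i hi => c.blocks_pos hi)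
    rw [hl] at this
    rw [div_eq_mul_one_div, this]
    rfl

theorem bcoef_eq (n k : ℕ) : bcoef n k = ∑ j ∈ range (k + 1),
    (-1 : ℝ) ^ j * (Nat.choose (n - (j + 1)) (k - j) : ℝ) * surjT n (j + 1) := by
  unfold bcoef
  rw [← Finset.Ico_add_one_right_eq_Icc, Finset.sum_Ico_eq_sum_range]
  apply sum_congr (by simp)
  intro j _
  rw [comp_sum, add_comm 1 j, Nat.add_sub_add_right, pow_add, pow_add]
  norm_num

theorem bcoef_zero (n : ℕ) (hn : 1 ≤ n) : bcoef (n + 1) 0 = bcoef n 0 := by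
  obtain ⟨m, rfl⟩ : ∃ m, n = m + 1 := ⟨n - 1, by omega⟩
  rw [bcoef_eq, bcoef_eq]
  have := surjT_succ (m + 1) 0
  simp [surjT_zero_right] at this ⊢
  exact this

theorem bcoef_top (n : ℕ) : bcoef n n = 0 := by
  rw [bcoef_eq]
  apply sum_eq_zero
  intro j hj
  rw [mem_range] at hj
  by_cases h : j = n
  · rw [surjT_gt n (j + 1) (by omega), mul_zero]
  · rw [Nat.choose_eq_zero_of_lt (by omega)]
    simp

theorem bcoef_rec (n k : ℕ) (hn : 1 ≤ n) (hk : k + 1 ≤ n) :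
    bcoef (n + 1) (k + 1) = (k + 2) * bcoef n (k + 1) - (n - k) * bcoef n k := by
  rw [bcoef_eq, bcoef_eq n (k + 1), bcoef_eq n k]
  simp only [surjT_succ, mul_add, sum_add_distrib]
  rw [sum_range_succ' (fun x => (-1 : ℝ) ^ x * ((n + 1 - (x + 1)).choose (k + 1 - x) : ℝ) *
    (((x : ℝ) + 1) * surjT n x))]
  have h0 : surjT n 0 = 0 := by
    obtain ⟨m, rfl⟩ : ∃ m, n = m + 1 := ⟨n - 1, by omega⟩
    exact surjT_zero_right m
  rw [h0, sum_range_succ, sum_range_succ _ (k + 1)]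
  have key : ∀ j ∈ range (k + 1),
      (-1 : ℝ) ^ j * ((n + 1 - (j + 1)).choose (k + 1 - j) : ℝ) * (((j : ℝ) + 1) * surjT n (j + 1))
      + (-1 : ℝ) ^ (j + 1) * ((n + 1 - (j + 1 + 1)).choose (k + 1 - (j + 1)) : ℝ) *
        ((((j + 1 : ℕ) : ℝ) + 1) * surjT n (j + 1))
      = (k + 2) * ((-1 : ℝ) ^ j * ((n - (j + 1)).choose (k + 1 - j) : ℝ) * surjT n (j + 1))
      - (n - k) * ((-1 : ℝ) ^ j * ((n - (j + 1)).choose (k - j) : ℝ) * surjT n (j + 1)) := by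
    intro j hj
    rw [mem_range] at hj
    obtain ⟨i, rfl⟩ : ∃ i, k = j + i := ⟨k - j, by omega⟩
    obtain ⟨N, rfl⟩ : ∃ N, n = j + 1 + i + N := ⟨n - (j + 1 + i), by omega⟩
    have e1 : j + 1 + i + N + 1 - (j + 1) = (i + N) + 1 := by omega
    have e2 : j + i + 1 - j = i + 1 := by omega
    have e3 : j + 1 + i + N + 1 - (j + 1 + 1) = i + N := by omega
    have e4 : j + i + 1 - (j + 1) = i := by omega
    have e5 : j + 1 + i + N - (j + 1) = i + N := by omega
    have e6 : j + i - j = i := by omega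
    rw [e1, e2, e3, e4, e5, e6, Nat.choose_succ_succ']
    have h := Nat.choose_succ_right_eq (i + N) i
    rw [Nat.add_sub_cancel_left] at h
    have h' : ((i + N).choose (i + 1) : ℝ) * (i + 1) = ((i + N).choose i : ℝ) * N := by
      exact_mod_cast h
    push_cast
    rw [pow_succ]
    linear_combination (-(-1 : ℝ) ^ j * surjT (j + 1 + i + N) (j + 1)) * h'
  have hs := sum_congr rfl key
  rw [sum_add_distrib, sum_sub_distrib, ← mul_sum, ← mul_sum] at hs
  simp only [Nat.sub_self, Nat.choose_zero_right]
  push_cast at hs ⊢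
  linear_combination hs

theorem bcoef_symm_aux (n : ℕ) : ∀ i j, i + j = n →
    bcoef (n + 1) i = (-1 : ℝ) ^ n * bcoef (n + 1) j := by
  induction n with
  | zero =>
    intro i j h
    obtain ⟨rfl, rfl⟩ : i = 0 ∧ j = 0 := by omega
    simp
  | succ n ih =>
    intro i j h
    have sq : ((-1 : ℝ) ^ n) * (-1) ^ n = 1 := by
      rw [← mul_pow]; norm_num
    rcases i with _ | i
    · obtain rfl : j = n + 1 := by omega
      rw [bcoef_zero _ (by omega), bcoef_rec _ _ (by omega) (by omega), bcoef_top,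
        ih 0 n (by omega), pow_succ]
      push_cast
      ring
    · rcases j with _ | j
      · obtain rfl : i = n := by omega
        rw [bcoef_zero _ (by omega), bcoef_rec _ _ (by omega) (by omega), bcoef_top,
          ih i 0 (by omega), pow_succ]
        push_cast
        ring
      · rw [bcoef_rec (n + 1) i (by omega) (by omega), bcoef_rec (n + 1) j (by omega) (by omega),
          ih (i + 1) j (by omega), ih i (j + 1) (by omega), pow_succ]
        obtain rfl : n = i + j + 1 := by omega
        push_cast
        ring

theorem bcoef_symmetry (n k : ℕ) (hn : 1 ≤ n) (hk : k ≤ n - 1) :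
    bcoef n k = (-1 : ℝ) ^ (n + 1) * bcoef n (n - 1 - k) := by
  obtain ⟨m, rfl⟩ : ∃ m, n = m + 1 := ⟨n - 1, by omega⟩
  rw [bcoef_symm_aux m k (m + 1 - 1 - k) (by omega), pow_add, pow_add]
  norm_num
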